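/- arXiv:2306.08652 — 2 statements merged into one kernel-verified Lean document; each statement's English description precedes it below -/
import Mathlib

section
/- Monotonicity in the interval length: for every admissible choice of n≥2, α>0, β>0, M ∈ ℝ, the functions L ↦ μ_n(β,L,M), L ↦ μ(α,β,L,M) and L ↦ μ*(α,β,L,M) are nondecreasing on (0,+∞). Moreover, for every L > δ(n), μ*_n(β, L_{δ(n)}^*, M) ≤ μ*_n(β,L,M) + log(2M²+2)/log n + βM²δ(n)³/3, where L_{δ(n)}^* = δ(n)⌈L/δ(n)⌉. -/
/-!
Each inequality compares two infima of nonnegative functionals by turning every competitor for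
the right-hand side into a competitor for the left-hand side (`sInf_image_le_add`).

* For `μ_n` and `μ` the competitor on the longer interval is restricted to the shorter one. Both
  terms of the functionals are integrals of nonnegative functions, or cardinalities of finite
  sets, so they do not increase (`RDPMF_mono`, `JF_mono`). Integrability is needed here; it holds
  since grid functions and step functions are measurable and bounded on bounded intervals.
* For `μ*` the restriction would spoil the boundary value at the right endpoint, so with
  `k = L₂ / L₁ ≥ 1` the competitor `u` is replaced by the homothetic copy `x ↦ u (k x) / k`. It
  has no more jumps than `u`, and its fidelity term is that of `u` divided by `k ^ 3`
  (`JF_dilate_le`).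
* For `μ*_n` the value of `u` on the last cell is changed from `M L` to `M L^*`. The last discrete
  derivative changes by at most `|M|`, and `1 + (p + q)² ≤ (2 M² + 2) (1 + p²)` when `|q| ≤ |M|`,
  so the logarithmic term grows by at most `δ / ω² · log (2 M² + 2) = log (2 M² + 2) / log n`.
  On the last cell the new fidelity term is exactly `M² δ³ / 3` (`RDPMF_modify_le`).
-/

open MeasureTheory Filter Set

namespace PeronaMalik

/-- `a_{δ,*} = δ⌊a/δ⌋`, the lower `δ`-approximation of `a`. -/
noncomputable def lowGrid (δ a : ℝ) : ℝ := δ * (⌊a / δ⌋ : ℤ)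

/-- `b_δ^* = δ⌈b/δ⌉`, the upper `δ`-approximation of `b`. -/
noncomputable def highGrid (δ b : ℝ) : ℝ := δ * (⌈b / δ⌉ : ℤ)

/-- `u` is piecewise constant at scale `δ`: constant on every interval `[zδ, (z+1)δ)`. -/
def IsPC (δ : ℝ) (u : ℝ → ℝ) : Prop :=
  ∀ z : ℤ, ∀ x ∈ Set.Ico ((z : ℝ) * δ) (((z : ℝ) + 1) * δ), u x = u ((z : ℝ) * δ)

/-- Discrete derivative `D^δ u (x) = (u(x+δ) - u(x))/δ`. -/
noncomputable def Dd (δ : ℝ) (u : ℝ → ℝ) (x : ℝ) : ℝ := (u (x + δ) - u x) / δ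

/-- The discrete Perona–Malik functional with fidelity term on `(a,b)`. -/
noncomputable def DPMF (n : ℕ) (β : ℝ) (f : ℝ → ℝ) (a b : ℝ) (u : ℝ → ℝ) : ℝ :=
  (∫ x in lowGrid (1 / (n : ℝ)) a..(highGrid (1 / (n : ℝ)) b - 1 / (n : ℝ)),
      Real.log (1 + (Dd (1 / (n : ℝ)) u x) ^ 2)) +
    β * ∫ x in a..b, (u x - f x) ^ 2

/-- `u` is a minimizer of `DPMF n β f (0,1)` over `PC_{1/n}(0,1)`. -/
def IsMinimizer (n : ℕ) (β : ℝ) (f : ℝ → ℝ) (u : ℝ → ℝ) : Prop :=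
  IsPC (1 / (n : ℝ)) u ∧
    ∀ v : ℝ → ℝ, IsPC (1 / (n : ℝ)) v → DPMF n β f 0 1 u ≤ DPMF n β f 0 1 v

/-- `m(n,β,f)`, the minimum value of the discrete Perona–Malik functional. -/
noncomputable def mval (n : ℕ) (β : ℝ) (f : ℝ → ℝ) : ℝ :=
  sInf ((fun u => DPMF n β f 0 1 u) '' {u | IsPC (1 / (n : ℝ)) u})

/-- `ω(n) = (log n / n)^{1/3}`. -/
noncomputable def omg (n : ℕ) : ℝ := (Real.log n / n) ^ ((1 : ℝ) / 3)

/-- `δ(n) = 1/(n ω(n))`. -/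
noncomputable def dlt (n : ℕ) : ℝ := 1 / ((n : ℝ) * omg n)

/-- The rescaled discrete Perona–Malik functional. -/
noncomputable def RDPM (n : ℕ) (a b : ℝ) (u : ℝ → ℝ) : ℝ :=
  (1 / omg n ^ 2) *
    ∫ x in lowGrid (dlt n) a..(highGrid (dlt n) b - dlt n),
      Real.log (1 + (Dd (dlt n) u x) ^ 2)

/-- The rescaled discrete Perona–Malik functional with fidelity term. -/
noncomputable def RDPMF (n : ℕ) (β : ℝ) (f : ℝ → ℝ) (a b : ℝ) (u : ℝ → ℝ) : ℝ :=
  RDPM n a b u + β * ∫ x in Set.Ioo a b, (u x - f x) ^ 2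

/-- `u` is a step function with finitely many jumps on `(a,b)`. -/
def IsStep (a b : ℝ) (u : ℝ → ℝ) : Prop :=
  ∃ (s : Finset ℝ) (c : ℝ) (J : ℝ → ℝ),
    (∀ p ∈ s, p ∈ Set.Ioo a b ∧ J p ≠ 0) ∧
    ∀ x ∈ Set.Ioo a b, u x = c + ∑ p ∈ s, (if p ≤ x then J p else 0)

/-- The set of jump (discontinuity) points of `u` inside `(a,b)`. -/
def jumpSet (a b : ℝ) (u : ℝ → ℝ) : Set ℝ :=
  {x ∈ Set.Ioo a b | ¬ ContinuousAt u x}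

/-- The limit functional `JF(α,β,f,(a,b),u) = α·#jumps + β∫(u-f)²`. -/
noncomputable def JF (α β : ℝ) (f : ℝ → ℝ) (a b : ℝ) (u : ℝ → ℝ) : ℝ :=
  α * ((jumpSet a b u).ncard : ℝ) + β * ∫ x in Set.Ioo a b, (u x - f x) ^ 2

/-- Strict convergence in `BV((a,b))`: `L¹` convergence plus convergence of
total variations. -/
def StrictBV (useq : ℕ → ℝ → ℝ) (u : ℝ → ℝ) (a b : ℝ) : Prop :=
  Tendsto (fun k => ∫ x in Set.Ioo a b, |useq k x - u x|) atTop (nhds 0) ∧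
  Tendsto (fun k => eVariationOn (useq k) (Set.Ioo a b)) atTop
    (nhds (eVariationOn u (Set.Ioo a b)))

/-- Locally strict convergence in `BV_loc(ℝ)`: strict convergence on every bounded
interval whose endpoints are not jump points of the limit. -/
def LocStrictBV (useq : ℕ → ℝ → ℝ) (u : ℝ → ℝ) : Prop :=
  ∀ a b : ℝ, a < b → ContinuousAt u a → ContinuousAt u b → StrictBV useq u a b

/-- `S(x) = 2⌊(x+1)/2⌋`. -/
noncomputable def stairS (x : ℝ) : ℝ := 2 * (⌊(x + 1) / 2⌋ : ℤ)

/-- The canonical `(H,V)`-staircase `S_{H,V}(x) = V·S(x/H)`. -/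
noncomputable def canStair (H V : ℝ) (x : ℝ) : ℝ := V * stairS (x / H)

/-- Oblique translations of the canonical `(H,V)`-staircase. -/
def Obl (H V : ℝ) (v : ℝ → ℝ) : Prop :=
  ∃ τ ∈ Set.Icc (-1 : ℝ) 1, ∀ x, v x = canStair H V (x - H * τ) + V * τ

/-- Graph translations of horizontal type of the canonical `(H,V)`-staircase. -/
def Orz (H V : ℝ) (v : ℝ → ℝ) : Prop :=
  ∃ τ ∈ Set.Icc (-1 : ℝ) 1, ∀ x, v x = canStair H V (x - H * τ)

/-- `μ_n(β,L,M)`: minimum of the rescaled functional with affine forcing term. -/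
noncomputable def muDisc (n : ℕ) (β L M : ℝ) : ℝ :=
  sInf ((fun u => RDPMF n β (fun x => M * x) 0 L u) '' {u | IsPC (dlt n) u})

/-- `μ*_n(β,L,M)`: same as `μ_n` but with boundary conditions `u(0)=0`, `u(L^*)=ML`. -/
noncomputable def muDiscStar (n : ℕ) (β L M : ℝ) : ℝ :=
  sInf ((fun u => RDPMF n β (fun x => M * x) 0 L u) ''
    {u | IsPC (dlt n) u ∧ u 0 = 0 ∧ u (highGrid (dlt n) L - dlt n) = M * L})

/-- `μ(α,β,L,M)`: minimum of the limit functional with affine forcing term. -/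
noncomputable def muLim (α β L M : ℝ) : ℝ :=
  sInf ((fun u => JF α β (fun x => M * x) 0 L u) '' {u | IsStep 0 L u})

/-- `μ*(α,β,L,M)`: same as `μ` but with boundary values `u(0⁺)=0`, `u(L⁻)=ML`. -/
noncomputable def muLimStar (α β L M : ℝ) : ℝ :=
  sInf ((fun u => JF α β (fun x => M * x) 0 L u) ''
    {u | IsStep 0 L u ∧ Tendsto u (nhdsWithin 0 (Set.Ioi 0)) (nhds 0) ∧
         Tendsto u (nhdsWithin L (Set.Iio L)) (nhds (M * L))})

/-- `u` and `v` have the same boundary values `u(a⁺)=v(a⁺)`, `u(b⁻)=v(b⁻)`. -/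
def SameBdry (a b : ℝ) (u v : ℝ → ℝ) : Prop :=
  (∀ c : ℝ, Tendsto v (nhdsWithin a (Set.Ioi a)) (nhds c) →
     Tendsto u (nhdsWithin a (Set.Ioi a)) (nhds c)) ∧
  (∀ c : ℝ, Tendsto v (nhdsWithin b (Set.Iio b)) (nhds c) →
     Tendsto u (nhdsWithin b (Set.Iio b)) (nhds c))

/-- `v` is a local minimizer for `JF(α,β,f,(a,b),·)` among step functions with the
same boundary values. -/
def IsLocalMinJF (α β : ℝ) (f : ℝ → ℝ) (a b : ℝ) (v : ℝ → ℝ) : Prop :=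
  IsStep a b v ∧
  ∀ u : ℝ → ℝ, IsStep a b u → SameBdry a b u v → JF α β f a b v ≤ JF α β f a b u

/-- `v` is an entire local minimizer for `JF(α,β,f,·,·)`. -/
def IsEntireLocalMinJF (α β : ℝ) (f : ℝ → ℝ) (v : ℝ → ℝ) : Prop :=
  ∀ a b : ℝ, a < b → IsLocalMinJF α β f a b v

/-- `v` is a local minimizer for `RDPMF_n(β,f,(a,b),·)` among piecewise constant
functions with the same boundary values. -/
def IsLocalMinRDPMF (n : ℕ) (β : ℝ) (f : ℝ → ℝ) (a b : ℝ) (v : ℝ → ℝ) : Prop :=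
  IsPC (dlt n) v ∧
  ∀ u : ℝ → ℝ, IsPC (dlt n) u →
    u (lowGrid (dlt n) a) = v (lowGrid (dlt n) a) →
    u (highGrid (dlt n) b - dlt n) = v (highGrid (dlt n) b - dlt n) →
    RDPMF n β f a b v ≤ RDPMF n β f a b u

/-- If every competitor for `G` on `B` yields a competitor for `F` on `A` at extra cost `C`, the
infima compare accordingly. -/
theorem sInf_image_le_add {A B : Set (ℝ → ℝ)} {F G : (ℝ → ℝ) → ℝ} {C : ℝ}
    (hF : ∀ u, 0 ≤ F u) (hB : B.Nonempty)
    (h : ∀ u ∈ B, ∃ v ∈ A, F v ≤ G u + C) :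
    sInf (F '' A) ≤ sInf (G '' B) + C := by
  rw [← sub_le_iff_le_add]
  refine le_csInf (hB.image G) ?_
  rintro _ ⟨u, hu, rfl⟩
  obtain ⟨v, hv, hvu⟩ := h u hu
  have h0 : BddBelow (F '' A) := ⟨0, by rintro _ ⟨w, -, rfl⟩; exact hF w⟩
  have := csInf_le h0 (mem_image_of_mem F hv)
  linarith

/-! ### Integrability -/

theorem integrableOn_of_meas_bdd {g : ℝ → ℝ} (hg : Measurable g) {a b C : ℝ}
    (hC : ∀ x ∈ Icc a b, |g x| ≤ C) : IntegrableOn g (Icc a b) := by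
  refine Measure.integrableOn_of_bounded (M := C) (by simp) hg.aestronglyMeasurable ?_
  exact (ae_restrict_iff' measurableSet_Icc).2 (Eventually.of_forall hC)

theorem integrableOn_fidelity {g : ℝ → ℝ} (hg : Measurable g) {a b C : ℝ}
    (hC : ∀ x ∈ Icc a b, |g x| ≤ C) (M : ℝ) :
    IntegrableOn (fun x => (g x - M * x) ^ 2) (Icc a b) := by
  refine integrableOn_of_meas_bdd (C := (C + |M| * (|a| + |b|)) ^ 2) (by fun_prop) ?_
  intro x hx
  have hxab : |x| ≤ |a| + |b| := by
    rw [abs_le]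
    constructor
    · linarith [neg_abs_le a, abs_nonneg b, hx.1]
    · linarith [le_abs_self b, abs_nonneg a, hx.2]
  have h1 : |g x - M * x| ≤ C + |M| * (|a| + |b|) := by
    calc |g x - M * x| ≤ |g x| + |M * x| := abs_sub _ _
      _ ≤ C + |M| * (|a| + |b|) := by
        rw [abs_mul]
        have := hC x hx
        gcongr
  rw [abs_pow]
  gcongr

/-! ### Functions constant on the cells of the grid -/

theorem IsPC.eq_floor {δ : ℝ} (hδ : 0 < δ) {u : ℝ → ℝ} (hu : IsPC δ u) (x : ℝ) :
    u x = u ((⌊x / δ⌋ : ℤ) * δ) := by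
  apply hu ⌊x / δ⌋ x
  constructor
  · exact (le_div_iff₀ hδ).1 (Int.floor_le _)
  · exact (div_lt_iff₀ hδ).1 (Int.lt_floor_add_one _)

theorem IsPC.measurable {δ : ℝ} (hδ : 0 < δ) {u : ℝ → ℝ} (hu : IsPC δ u) : Measurable u := by
  have h : u = (fun z : ℤ => u (z * δ)) ∘ fun x => ⌊x / δ⌋ := funext fun x => hu.eq_floor hδ x
  rw [h]
  exact (measurable_of_countable _).comp (Int.measurable_floor.comp (measurable_id.div_const δ))

theorem IsPC.bdd {δ : ℝ} (hδ : 0 < δ) {u : ℝ → ℝ} (hu : IsPC δ u) (a b : ℝ) :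
    ∃ C, ∀ x ∈ Icc a b, |u x| ≤ C := by
  obtain ⟨C, hC⟩ := ((Set.finite_Icc ⌊a / δ⌋ ⌊b / δ⌋).image fun z : ℤ => |u (z * δ)|).bddAbove
  refine ⟨C, fun x hx => ?_⟩
  rw [hu.eq_floor hδ x]
  refine hC (mem_image_of_mem (fun z : ℤ => |u (z * δ)|) ⟨?_, ?_⟩)
  · exact Int.floor_le_floor (div_le_div_of_nonneg_right hx.1 hδ.le)
  · exact Int.floor_le_floor (div_le_div_of_nonneg_right hx.2 hδ.le)

/-- The integrand of `RDPM` is again constant on the cells. -/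
theorem IsPC.log_Dd {δ : ℝ} {u : ℝ → ℝ} (hu : IsPC δ u) :
    IsPC δ (fun x => Real.log (1 + (Dd δ u x) ^ 2)) := by
  intro z x hx
  have h1 := hu z x hx
  have h2 := hu (z + 1) (x + δ)
    ⟨by push_cast; linarith [hx.1], by push_cast; linarith [hx.2]⟩
  have h3 : ((z + 1 : ℤ) : ℝ) * δ = z * δ + δ := by push_cast; ring
  rw [h3] at h2
  simp only [Dd, h1, h2]

theorem IsPC.intervalIntegrable_log {δ : ℝ} (hδ : 0 < δ) {u : ℝ → ℝ} (hu : IsPC δ u)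
    {a b : ℝ} (hab : a ≤ b) :
    IntervalIntegrable (fun x => Real.log (1 + (Dd δ u x) ^ 2)) volume a b := by
  obtain ⟨C, hC⟩ := hu.log_Dd.bdd hδ a b
  rw [intervalIntegrable_iff_integrableOn_Icc_of_le hab]
  exact integrableOn_of_meas_bdd (hu.log_Dd.measurable hδ) hC

theorem IsPC.integrableOn_fidelity {δ : ℝ} (hδ : 0 < δ) {u : ℝ → ℝ} (hu : IsPC δ u)
    (a b M : ℝ) : IntegrableOn (fun x => (u x - M * x) ^ 2) (Icc a b) := by
  obtain ⟨C, hC⟩ := hu.bdd hδ a b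
  exact PeronaMalik.integrableOn_fidelity (hu.measurable hδ) hC M

theorem log_Dd_nonneg (δ : ℝ) (u : ℝ → ℝ) (x : ℝ) : 0 ≤ Real.log (1 + (Dd δ u x) ^ 2) :=
  Real.log_nonneg (by nlinarith [sq_nonneg (Dd δ u x)])

/-! ### The discrete functional -/

theorem omg_pos {n : ℕ} (hn : 2 ≤ n) : 0 < omg n := by
  have h1 : (1 : ℝ) < n := by exact_mod_cast hn
  exact Real.rpow_pos_of_pos (div_pos (Real.log_pos h1) (by linarith)) _

theorem dlt_pos {n : ℕ} (hn : 2 ≤ n) : 0 < dlt n := by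
  have h1 : (0 : ℝ) < n := by positivity
  exact div_pos one_pos (mul_pos h1 (omg_pos hn))

/-- The scale relation `δ(n) / ω(n)² = 1 / log n`, from `n ω(n)³ = log n`. -/
theorem dlt_div_omg_sq {n : ℕ} (hn : 2 ≤ n) : 1 / omg n ^ 2 * dlt n = 1 / Real.log n := by
  have h1 : (1 : ℝ) < n := by exact_mod_cast hn
  have h0 : (0 : ℝ) < n := by linarith
  have hl : 0 < Real.log n := Real.log_pos h1
  have hw := omg_pos hn
  have h3 : omg n ^ 3 = Real.log n / n := by
    unfold omg
    rw [← Real.rpow_natCast, ← Real.rpow_mul (div_pos hl h0).le]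
    norm_num
  have h4 : n * omg n ^ 3 = Real.log n := by rw [h3]; field_simp
  unfold dlt
  rw [← h4]
  field_simp

theorem lowGrid_zero (δ : ℝ) : lowGrid δ 0 = 0 := by simp [lowGrid]

theorem highGrid_sub_nonneg {δ L : ℝ} (hδ : 0 < δ) (hL : 0 < L) : 0 ≤ highGrid δ L - δ := by
  have h1 : (1 : ℤ) ≤ ⌈L / δ⌉ := Int.one_le_ceil_iff.2 (div_pos hL hδ)
  have h2 : (1 : ℝ) ≤ ((⌈L / δ⌉ : ℤ) : ℝ) := by exact_mod_cast h1
  unfold highGrid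
  nlinarith

theorem RDPMF_nonneg {n : ℕ} (hn : 2 ≤ n) {β L M : ℝ} (hβ : 0 < β) (hL : 0 < L) (u : ℝ → ℝ) :
    0 ≤ RDPMF n β (fun x => M * x) 0 L u := by
  have hδ := dlt_pos hn
  unfold RDPMF RDPM
  rw [lowGrid_zero]
  have h1 : 0 ≤ ∫ x in (0 : ℝ)..(highGrid (dlt n) L - dlt n),
      Real.log (1 + (Dd (dlt n) u x) ^ 2) :=
    intervalIntegral.integral_nonneg (highGrid_sub_nonneg hδ hL) fun x _ => log_Dd_nonneg _ _ _
  have h2 : 0 ≤ ∫ x in Ioo 0 L, (u x - M * x) ^ 2 := integral_nonneg fun x => sq_nonneg _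
  positivity

theorem RDPMF_mono {n : ℕ} (hn : 2 ≤ n) {β L₁ L₂ M : ℝ} (hβ : 0 < β) (hL : 0 < L₁)
    (hLL : L₁ ≤ L₂) {u : ℝ → ℝ} (hu : IsPC (dlt n) u) :
    RDPMF n β (fun x => M * x) 0 L₁ u ≤ RDPMF n β (fun x => M * x) 0 L₂ u := by
  have hδ := dlt_pos hn
  unfold RDPMF RDPM
  rw [lowGrid_zero]
  have hg : highGrid (dlt n) L₁ ≤ highGrid (dlt n) L₂ := by
    unfold highGrid
    gcongr
  have h0 := highGrid_sub_nonneg hδ hL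
  have h1 : ∫ x in (0 : ℝ)..(highGrid (dlt n) L₁ - dlt n), Real.log (1 + (Dd (dlt n) u x) ^ 2) ≤
      ∫ x in (0 : ℝ)..(highGrid (dlt n) L₂ - dlt n), Real.log (1 + (Dd (dlt n) u x) ^ 2) := by
    refine intervalIntegral.integral_mono_interval le_rfl h0 (by linarith)
      (Eventually.of_forall fun x => log_Dd_nonneg _ _ _)
      (hu.intervalIntegrable_log hδ (by linarith))
  have h2 : ∫ x in Ioo 0 L₁, (u x - M * x) ^ 2 ≤ ∫ x in Ioo 0 L₂, (u x - M * x) ^ 2 := by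
    refine setIntegral_mono_set ((hu.integrableOn_fidelity hδ 0 L₂ M).mono_set Ioo_subset_Icc_self)
      (Eventually.of_forall fun x => sq_nonneg _) ?_
    exact (Ioo_subset_Ioo_right hLL).eventuallyLE
  gcongr

/-- The modification of a grid function used for `μ*_n`: the value is replaced by `c` from the
abscissa `a` onwards. -/
noncomputable def modifyFrom (a c : ℝ) (u : ℝ → ℝ) (x : ℝ) : ℝ := if x < a then u x else c

theorem IsPC.modifyFrom {δ : ℝ} (hδ : 0 < δ) {u : ℝ → ℝ} (hu : IsPC δ u) (k : ℤ) (c : ℝ) :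
    IsPC δ (modifyFrom (k * δ) c u) := by
  intro z x hx
  unfold PeronaMalik.modifyFrom
  rcases lt_or_ge z k with hzk | hzk
  · have h1 : ((z : ℝ) + 1) ≤ k := by exact_mod_cast hzk
    have h2 : ((z : ℝ) + 1) * δ ≤ k * δ := by gcongr
    rw [if_pos (lt_of_lt_of_le hx.2 h2), if_pos (by nlinarith), hu z x hx]
  · have h1 : (k : ℝ) ≤ z := by exact_mod_cast hzk
    have h2 : (k : ℝ) * δ ≤ z * δ := by gcongr
    rw [if_neg (not_lt.2 (h2.trans hx.1)), if_neg (not_lt.2 h2)]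

/-- The cost of moving a slope from `p` to `p + q` with `q² ≤ M²`. -/
theorem log_add_le {p q M : ℝ} (hq : q ^ 2 ≤ M ^ 2) :
    Real.log (1 + (p + q) ^ 2) ≤ Real.log (1 + p ^ 2) + Real.log (2 * M ^ 2 + 2) := by
  rw [← Real.log_mul (by positivity) (by positivity)]
  apply Real.log_le_log (by positivity)
  nlinarith [sq_nonneg (p - q), mul_nonneg (sq_nonneg p) (sq_nonneg M)]

/-- Changing the value on the last cell from `M L` to `M L^*` costs at most
`log (2 M² + 2) / log n` in the logarithmic term and `β M² δ(n)³ / 3` in the fidelity term. In the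
proof `N` is the number of cells and `a = (N - 1) δ(n)` is the left end of the last one. -/
theorem RDPMF_modify_le {n : ℕ} (hn : 2 ≤ n) {β L M : ℝ} (hβ : 0 < β) (hL : dlt n < L)
    {u : ℝ → ℝ} (hu : IsPC (dlt n) u) (huL : u (highGrid (dlt n) L - dlt n) = M * L) :
    RDPMF n β (fun x => M * x) 0 (highGrid (dlt n) L)
        (modifyFrom (highGrid (dlt n) L - dlt n) (M * highGrid (dlt n) L) u) ≤
      RDPMF n β (fun x => M * x) 0 L u + (Real.log (2 * M ^ 2 + 2) / Real.log n
          + β * M ^ 2 * dlt n ^ 3 / 3) := by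
  have hδ := dlt_pos hn
  have hscale := dlt_div_omg_sq hn
  have hw := omg_pos hn
  unfold RDPMF RDPM
  generalize hd : dlt n = δ at *
  obtain ⟨N, hN⟩ : ∃ N : ℤ, ⌈L / δ⌉ = N := ⟨_, rfl⟩
  have hH : highGrid δ L = δ * N := by rw [highGrid, hN]
  have hHH : highGrid δ (δ * N) = δ * N := by
    rw [highGrid, mul_div_cancel_left₀ _ hδ.ne', Int.ceil_intCast]
  rw [lowGrid_zero, hH, hHH]
  rw [hH] at huL
  have hN2 : (2 : ℝ) ≤ N := by
    have : 1 < ⌈L / δ⌉ := Int.lt_ceil.2 (by rw [lt_div_iff₀ hδ]; simpa using hL)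
    rw [hN] at this
    exact_mod_cast this
  have hLN : L ≤ δ * N := by
    have := Int.le_ceil (L / δ)
    rw [hN, div_le_iff₀ hδ] at this
    linarith
  have hNL : δ * N - δ < L := by
    have := Int.ceil_lt_add_one (L / δ)
    rw [hN, ← sub_lt_iff_lt_add, lt_div_iff₀ hδ] at this
    linarith
  obtain ⟨a, ha⟩ : ∃ a, a = δ * N - δ := ⟨_, rfl⟩
  have haδ : δ ≤ a := by nlinarith
  have hHa : δ * N = a + δ := by linarith
  have hak : a = ((N - 1 : ℤ) : ℝ) * δ := by push_cast; linarith
  obtain ⟨v, hv⟩ : ∃ v, v = modifyFrom a (M * (a + δ)) u := ⟨_, rfl⟩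
  have hvpc : IsPC δ v := by rw [hv, hak]; exact hu.modifyFrom hδ _ _
  rw [← ha, hHa, ← hv]
  rw [← ha] at huL hNL
  rw [hHa] at hLN
  have hvu : ∀ x, x < a → v x = u x := fun x hx => by rw [hv, modifyFrom, if_pos hx]
  have hvc : ∀ x, a ≤ x → v x = M * (a + δ) := fun x hx => by
    rw [hv, modifyFrom, if_neg (not_lt.2 hx)]
  have huc : ∀ x, a ≤ x → x < a + δ → u x = M * L := fun x hx hx' => by
    rw [← huL, hak]
    refine hu (N - 1) x ⟨hak ▸ hx, ?_⟩
    rw [hak] at hx'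
    linarith
  -- The logarithmic term changes only on the cell `[a - δ, a)`.
  have hlog : ∫ x in (0 : ℝ)..a, Real.log (1 + (Dd δ v x) ^ 2) ≤
      (∫ x in (0 : ℝ)..a, Real.log (1 + (Dd δ u x) ^ 2)) + δ * Real.log (2 * M ^ 2 + 2) := by
    have i1 := hu.intervalIntegrable_log hδ (a := 0) (b := a - δ) (by linarith)
    have i2 := hu.intervalIntegrable_log hδ (a := a - δ) (b := a) (by linarith)
    have j1 := hvpc.intervalIntegrable_log hδ (a := 0) (b := a - δ) (by linarith)
    have j2 := hvpc.intervalIntegrable_log hδ (a := a - δ) (b := a) (by linarith)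
    rw [← intervalIntegral.integral_add_adjacent_intervals i1 i2,
      ← intervalIntegral.integral_add_adjacent_intervals j1 j2]
    have e1 : ∫ x in (0 : ℝ)..(a - δ), Real.log (1 + (Dd δ v x) ^ 2) ≤
        ∫ x in (0 : ℝ)..(a - δ), Real.log (1 + (Dd δ u x) ^ 2) := by
      refine intervalIntegral.integral_mono_on_of_le_Ioo (by linarith) j1 i1 fun x hx => ?_
      rw [Dd, Dd, hvu x (by linarith [hx.2]), hvu (x + δ) (by linarith [hx.2])]
    have e2 : ∫ x in (a - δ)..a, Real.log (1 + (Dd δ v x) ^ 2) ≤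
        ∫ x in (a - δ)..a, (Real.log (1 + (Dd δ u x) ^ 2) + Real.log (2 * M ^ 2 + 2)) := by
      refine intervalIntegral.integral_mono_on_of_le_Ioo (by linarith) j2
        (i2.add intervalIntegrable_const) fun x hx => ?_
      have hDv : Dd δ v x = Dd δ u x + M * ((a + δ - L) / δ) := by
        rw [Dd, Dd, hvu x hx.2, hvc (x + δ) (by linarith [hx.1]),
          huc (x + δ) (by linarith [hx.1]) (by linarith [hx.2])]
        ring
      rw [hDv]
      apply log_add_le
      have h0 : 0 ≤ (a + δ - L) / δ := div_nonneg (by linarith) hδ.le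
      have h1 : (a + δ - L) / δ ≤ 1 := by rw [div_le_one hδ]; linarith
      rw [mul_pow]
      exact mul_le_of_le_one_right (sq_nonneg M) (pow_le_one₀ h0 h1)
    rw [intervalIntegral.integral_add i2 intervalIntegrable_const,
      intervalIntegral.integral_const, smul_eq_mul] at e2
    linarith
  have hfid : ∫ x in Ioo 0 (a + δ), (v x - M * x) ^ 2 ≤
      (∫ x in Ioo 0 L, (u x - M * x) ^ 2) + M ^ 2 * δ ^ 3 / 3 := by
    have k1 : ∫ x in Ioo 0 a, (u x - M * x) ^ 2 ≤ ∫ x in Ioo 0 L, (u x - M * x) ^ 2 :=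
      setIntegral_mono_set ((hu.integrableOn_fidelity hδ 0 L M).mono_set Ioo_subset_Icc_self)
        (Eventually.of_forall fun x => sq_nonneg _)
        (Ioo_subset_Ioo_right hNL.le).eventuallyLE
    have k2 : ∫ x in Ioo 0 a, (v x - M * x) ^ 2 = ∫ x in Ioo 0 a, (u x - M * x) ^ 2 :=
      setIntegral_congr_fun measurableSet_Ioo fun x hx => by simp only [hvu x hx.2]
    have hi : ∀ c d : ℝ, c ≤ d →
        IntervalIntegrable (fun x => (v x - M * x) ^ 2) volume c d := fun c d hcd =>
      (intervalIntegrable_iff_integrableOn_Icc_of_le hcd).2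
        (hvpc.integrableOn_fidelity hδ c d M)
    have k3 : ∫ x in a..(a + δ), (v x - M * x) ^ 2 = M ^ 2 * δ ^ 3 / 3 := by
      have e : ∫ x in a..(a + δ), (v x - M * x) ^ 2 =
          ∫ x in a..(a + δ), M ^ 2 * ((a + δ) - x) ^ 2 := by
        refine intervalIntegral.integral_congr fun x hx => ?_
        rw [uIcc_of_le (by linarith)] at hx
        simp only [hvc x hx.1]
        ring
      rw [e, intervalIntegral.integral_const_mul,
        intervalIntegral.integral_comp_sub_left (fun y => y ^ 2) (a + δ), integral_pow]
      norm_num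
      ring
    rw [← integral_Ioc_eq_integral_Ioo, ← intervalIntegral.integral_of_le (by linarith),
      ← intervalIntegral.integral_add_adjacent_intervals (hi 0 a (by linarith))
        (hi a (a + δ) (by linarith)), k3, intervalIntegral.integral_of_le (by linarith),
      integral_Ioc_eq_integral_Ioo, k2]
    linarith
  have hlog' := mul_le_mul_of_nonneg_left hlog (show 0 ≤ 1 / omg n ^ 2 by positivity)
  have hfid' := mul_le_mul_of_nonneg_left hfid hβ.le
  rw [mul_add, ← mul_assoc (1 / omg n ^ 2) δ, hscale] at hlog'
  have e1 : 1 / Real.log n * Real.log (2 * M ^ 2 + 2) =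
    Real.log (2 * M ^ 2 + 2) / Real.log n := by ring
  rw [e1] at hlog'
  linarith

/-! ### Step functions and the limit functional -/

theorem IsStep.integrableOn_fidelity {a b : ℝ} {u : ℝ → ℝ} (hu : IsStep a b u) (M : ℝ) :
    IntegrableOn (fun x => (u x - M * x) ^ 2) (Ioo a b) := by
  obtain ⟨s, c, J, -, h⟩ := hu
  have hm : Measurable fun x : ℝ => c + ∑ p ∈ s, (if p ≤ x then J p else 0) := by
    refine measurable_const.add (Finset.measurable_fun_sum s fun p _ => ?_)
    exact Measurable.ite measurableSet_Ici measurable_const measurable_const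
  have hb : ∀ x ∈ Icc a b, |c + ∑ p ∈ s, (if p ≤ x then J p else 0)| ≤ |c| + ∑ p ∈ s, |J p| := by
    intro x _
    refine (abs_add_le _ _).trans ?_
    gcongr
    refine (Finset.abs_sum_le_sum_abs _ _).trans (Finset.sum_le_sum fun p _ => ?_)
    split_ifs <;> simp
  have := (PeronaMalik.integrableOn_fidelity hm hb M).mono_set
    (Ioo_subset_Icc_self : Ioo a b ⊆ Icc a b)
  exact this.congr_fun (fun x hx => by simp only [h x hx]) measurableSet_Ioo

/-- Away from the finitely many abscissas of its representation, a step function is locally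
constant. -/
theorem IsStep.jumpSet_finite {a b : ℝ} {u : ℝ → ℝ} (hu : IsStep a b u) :
    (jumpSet a b u).Finite := by
  obtain ⟨s, c, J, -, h⟩ := hu
  refine s.finite_toSet.subset ?_
  rintro x ⟨hx, hnc⟩
  by_contra hxs
  apply hnc
  have h1 : ContinuousAt (fun x : ℝ => c + ∑ p ∈ s, (if p ≤ x then J p else 0)) x := by
    refine continuousAt_const.add (tendsto_finsetSum s fun p hp => ?_)
    have hne : p ≠ x := fun e => hxs (by simpa [e] using hp)
    rcases lt_or_gt_of_ne hne with hlt | hlt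
    · refine (continuousAt_const (y := J p)).congr ?_ |>.tendsto
      filter_upwards [lt_mem_nhds hlt] with y hy
      rw [if_pos hy.le]
    · refine (continuousAt_const (y := (0 : ℝ))).congr ?_ |>.tendsto
      filter_upwards [gt_mem_nhds hlt] with y hy
      rw [if_neg (not_le.2 hy)]
  refine h1.congr ?_
  filter_upwards [Ioo_mem_nhds hx.1 hx.2] with y hy
  rw [h y hy]

theorem IsStep.restrict {L₁ L₂ : ℝ} (hLL : L₁ ≤ L₂) {u : ℝ → ℝ} (hu : IsStep 0 L₂ u) :
    IsStep 0 L₁ u := by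
  obtain ⟨s, c, J, hs, h⟩ := hu
  refine ⟨s.filter (· < L₁), c, J, fun p hp => ?_, fun x hx => ?_⟩
  · rw [Finset.mem_filter] at hp
    exact ⟨⟨(hs p hp.1).1.1, hp.2⟩, (hs p hp.1).2⟩
  · rw [h x ⟨hx.1, hx.2.trans_le hLL⟩, Finset.sum_filter]
    congr 1
    refine Finset.sum_congr rfl fun p _ => ?_
    by_cases hpx : p ≤ x
    · rw [if_pos (lt_of_le_of_lt hpx hx.2)]
    · simp [hpx]

theorem JF_nonneg {α β L M : ℝ} (hα : 0 < α) (hβ : 0 < β) (u : ℝ → ℝ) :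
    0 ≤ JF α β (fun x => M * x) 0 L u := by
  have h2 : 0 ≤ ∫ x in Ioo 0 L, (u x - M * x) ^ 2 := integral_nonneg fun x => sq_nonneg _
  unfold JF
  positivity

theorem JF_mono {α β L₁ L₂ M : ℝ} (hα : 0 < α) (hβ : 0 < β) (hLL : L₁ ≤ L₂) {u : ℝ → ℝ}
    (hu : IsStep 0 L₂ u) :
    JF α β (fun x => M * x) 0 L₁ u ≤ JF α β (fun x => M * x) 0 L₂ u := by
  have h1 : (jumpSet 0 L₁ u).ncard ≤ (jumpSet 0 L₂ u).ncard :=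
    Set.ncard_le_ncard (fun x hx => ⟨⟨hx.1.1, hx.1.2.trans_le hLL⟩, hx.2⟩) hu.jumpSet_finite
  have h2 : ∫ x in Ioo 0 L₁, (u x - M * x) ^ 2 ≤ ∫ x in Ioo 0 L₂, (u x - M * x) ^ 2 :=
    setIntegral_mono_set (hu.integrableOn_fidelity M)
      (Eventually.of_forall fun x => sq_nonneg _) (Ioo_subset_Ioo_right hLL).eventuallyLE
  unfold JF
  gcongr

theorem isStep_const (L c : ℝ) : IsStep 0 L fun _ => c := ⟨∅, c, 0, by simp, by simp⟩

/-- A function with at most one jump, of height `c`, at `L / 2`. -/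
theorem isStep_single {L : ℝ} (hL : 0 < L) (c : ℝ) :
    IsStep 0 L fun x => if L / 2 ≤ x then c else 0 := by
  by_cases hc : c = 0
  · simpa [hc] using isStep_const L 0
  · refine ⟨{L / 2}, 0, fun _ => c, ?_, by simp⟩
    intro p hp
    rw [Finset.mem_singleton] at hp
    subst hp
    exact ⟨⟨by linarith, by linarith⟩, hc⟩

theorem IsStep.dilate {L k : ℝ} (hk : 0 < k) {u : ℝ → ℝ} (hu : IsStep 0 (k * L) u) :
    IsStep 0 L fun x => u (k * x) / k := by
  obtain ⟨s, c, J, hs, h⟩ := hu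
  refine ⟨s.image (· / k), c / k, fun q => J (k * q) / k, fun q hq => ?_, fun x hx => ?_⟩
  · obtain ⟨p, hp, rfl⟩ := Finset.mem_image.1 hq
    obtain ⟨⟨h0, h1⟩, hJ⟩ := hs p hp
    refine ⟨⟨div_pos h0 hk, by rwa [div_lt_iff₀' hk]⟩, ?_⟩
    beta_reduce
    rw [mul_div_cancel₀ _ hk.ne']
    exact div_ne_zero hJ hk.ne'
  · have hx' : k * x ∈ Ioo 0 (k * L) :=
      ⟨mul_pos hk hx.1, mul_lt_mul_of_pos_left hx.2 hk⟩
    beta_reduce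
    rw [h _ hx', Finset.sum_image fun p _ q _ hpq => (div_left_inj' hk.ne').1 hpq, add_div,
      Finset.sum_div]
    congr 1
    refine Finset.sum_congr rfl fun p _ => ?_
    rw [mul_div_cancel₀ _ hk.ne']
    simp only [div_le_iff₀' hk]
    split_ifs <;> simp

theorem JF_dilate_le {α β L k M : ℝ} (hα : 0 < α) (hβ : 0 < β) (hL : 0 < L) (hk : 1 ≤ k)
    {u : ℝ → ℝ} (hu : IsStep 0 (k * L) u) :
    JF α β (fun x => M * x) 0 L (fun x => u (k * x) / k) ≤
      JF α β (fun x => M * x) 0 (k * L) u := by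
  have hk0 : 0 < k := by linarith
  have h1 : (jumpSet 0 L fun x => u (k * x) / k).ncard ≤ (jumpSet 0 (k * L) u).ncard := by
    refine (Set.ncard_le_ncard ?_ (hu.jumpSet_finite.image (· / k))).trans
      (Set.ncard_image_le hu.jumpSet_finite)
    rintro x ⟨hx, hnc⟩
    refine ⟨k * x, ⟨⟨mul_pos hk0 hx.1, mul_lt_mul_of_pos_left hx.2 hk0⟩, fun hc => hnc ?_⟩,
      mul_div_cancel_left₀ x hk0.ne'⟩
    have hm : ContinuousAt (fun y : ℝ => k * y) x := by fun_prop
    exact (ContinuousAt.comp (f := fun y : ℝ => k * y) hc hm).div_const k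
  have h2 : ∫ x in Ioo 0 L, (u (k * x) / k - M * x) ^ 2 ≤
      ∫ x in Ioo 0 (k * L), (u x - M * x) ^ 2 := by
    have h0 : 0 ≤ ∫ x in Ioo 0 (k * L), (u x - M * x) ^ 2 :=
      integral_nonneg fun x => sq_nonneg _
    have e : ∫ x in Ioo 0 L, (u (k * x) / k - M * x) ^ 2 =
        (k⁻¹) ^ 3 * ∫ x in Ioo 0 (k * L), (u x - M * x) ^ 2 := by
      rw [← integral_Ioc_eq_integral_Ioo, ← integral_Ioc_eq_integral_Ioo,
        ← intervalIntegral.integral_of_le hL.le,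
        ← intervalIntegral.integral_of_le (by positivity)]
      have e1 : ∀ x, (u (k * x) / k - M * x) ^ 2 =
          (k⁻¹) ^ 2 * (u (k * x) - M * (k * x)) ^ 2 := by
        intro x
        field_simp
      simp_rw [e1]
      rw [intervalIntegral.integral_const_mul,
        intervalIntegral.integral_comp_mul_left (fun y => (u y - M * y) ^ 2) hk0.ne', mul_zero, smul_eq_mul]
      ring
    rw [e]
    exact mul_le_of_le_one_left h0 (pow_le_one₀ (by positivity) (inv_le_one_of_one_le₀ hk))
  unfold JF
  gcongr

/-- The dilation sends boundary values `0`, `M k L` to `0`, `M L`. -/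
theorem tendsto_dilate {L k M : ℝ} (hk : 0 < k) {u : ℝ → ℝ}
    (h0 : Tendsto u (nhdsWithin 0 (Ioi 0)) (nhds 0))
    (h1 : Tendsto u (nhdsWithin (k * L) (Iio (k * L))) (nhds (M * (k * L)))) :
    Tendsto (fun x => u (k * x) / k) (nhdsWithin 0 (Ioi 0)) (nhds 0) ∧
      Tendsto (fun x => u (k * x) / k) (nhdsWithin L (Iio L)) (nhds (M * L)) := by
  have hm : Continuous fun y : ℝ => k * y := by fun_prop
  constructor
  · have ht : Tendsto (fun y : ℝ => k * y) (nhdsWithin 0 (Ioi 0)) (nhdsWithin 0 (Ioi 0)) := by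
      refine tendsto_nhdsWithin_of_tendsto_nhds_of_eventually_within _ ?_ ?_
      · have := (hm.tendsto 0).mono_left (nhdsWithin_le_nhds (s := Ioi (0 : ℝ)))
        rwa [mul_zero] at this
      · filter_upwards [self_mem_nhdsWithin] with y hy using mul_pos hk hy
    simpa using (h0.comp ht).div_const k
  · have ht : Tendsto (fun y : ℝ => k * y) (nhdsWithin L (Iio L))
        (nhdsWithin (k * L) (Iio (k * L))) := by
      refine tendsto_nhdsWithin_of_tendsto_nhds_of_eventually_within _ ?_ ?_
      · exact (hm.tendsto L).mono_left nhdsWithin_le_nhds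
      · filter_upwards [self_mem_nhdsWithin] with y hy using mul_lt_mul_of_pos_left hy hk
    have := (h1.comp ht).div_const k
    rwa [show M * (k * L) / k = M * L by field_simp] at this

/-- The minimum values `μ_n`, `μ`, `μ*` are nondecreasing in the
length `L` on `(0,+∞)`; and `μ*_n` satisfies
`μ*_n(β,L^*_{δ(n)},M) ≤ μ*_n(β,L,M) + log(2M²+2)/log n + βM²δ(n)³/3` for `L > δ(n)`. -/
theorem mu_properties_in_L
    (n : ℕ) (hn : 2 ≤ n) (α β M : ℝ) (hα : 0 < α) (hβ : 0 < β) :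
    MonotoneOn (fun L => muDisc n β L M) (Set.Ioi 0) ∧
    MonotoneOn (fun L => muLim α β L M) (Set.Ioi 0) ∧
    MonotoneOn (fun L => muLimStar α β L M) (Set.Ioi 0) ∧
    ∀ L : ℝ, dlt n < L →
      muDiscStar n β (highGrid (dlt n) L) M ≤
        muDiscStar n β L M + Real.log (2 * M ^ 2 + 2) / Real.log n
          + β * M ^ 2 * dlt n ^ 3 / 3 := by
  have hδ := dlt_pos hn
  refine ⟨fun L₁ h₁ L₂ h₂ hLL => ?_, fun L₁ h₁ L₂ h₂ hLL => ?_, fun L₁ h₁ L₂ h₂ hLL => ?_,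
    fun L hL => ?_⟩
  · have := sInf_image_le_add (C := 0) (F := fun u => RDPMF n β (fun x => M * x) 0 L₁ u)
      (G := fun u => RDPMF n β (fun x => M * x) 0 L₂ u) (A := {u | IsPC (dlt n) u})
      (B := {u | IsPC (dlt n) u}) (fun u => RDPMF_nonneg hn hβ h₁ u)
      ⟨fun _ => 0, fun _ _ _ => rfl⟩
      fun u hu => ⟨u, hu, by simpa using RDPMF_mono hn hβ h₁ hLL hu⟩
    simpa [muDisc] using this
  · have := sInf_image_le_add (C := 0) (F := fun u => JF α β (fun x => M * x) 0 L₁ u)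
      (G := fun u => JF α β (fun x => M * x) 0 L₂ u) (A := {u | IsStep 0 L₁ u})
      (B := {u | IsStep 0 L₂ u}) (fun u => JF_nonneg hα hβ u) ⟨_, isStep_const L₂ 0⟩
      fun u hu => ⟨u, IsStep.restrict hLL hu, by simpa using JF_mono hα hβ hLL hu⟩
    simpa [muLim] using this
  · rw [mem_Ioi] at h₁ h₂
    obtain ⟨k, hk, rfl⟩ : ∃ k, 1 ≤ k ∧ L₂ = k * L₁ :=
      ⟨L₂ / L₁, (one_le_div h₁).2 hLL, by field_simp⟩
    have hk0 : 0 < k := by linarith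
    have := sInf_image_le_add (C := 0) (F := fun u => JF α β (fun x => M * x) 0 L₁ u)
      (G := fun u => JF α β (fun x => M * x) 0 (k * L₁) u)
      (A := {u | IsStep 0 L₁ u ∧ Tendsto u (nhdsWithin 0 (Set.Ioi 0)) (nhds 0) ∧
         Tendsto u (nhdsWithin L₁ (Set.Iio L₁)) (nhds (M * L₁))})
      (B := {u | IsStep 0 (k * L₁) u ∧ Tendsto u (nhdsWithin 0 (Set.Ioi 0)) (nhds 0) ∧
         Tendsto u (nhdsWithin (k * L₁) (Set.Iio (k * L₁))) (nhds (M * (k * L₁)))})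
      (fun u => JF_nonneg hα hβ u) ?_ ?_
    · simpa [muLimStar] using this
    · refine ⟨_, isStep_single h₂ (M * (k * L₁)), ?_, ?_⟩
      · refine (tendsto_const_nhds (x := (0 : ℝ))).congr' ?_
        filter_upwards [nhdsWithin_le_nhds (gt_mem_nhds (half_pos h₂))] with x hx
        rw [if_neg (not_le.2 hx)]
      · refine (tendsto_const_nhds (x := M * (k * L₁))).congr' ?_
        filter_upwards [nhdsWithin_le_nhds (lt_mem_nhds (half_lt_self h₂))] with x hx
        rw [if_pos (le_of_lt hx)]
    · rintro u ⟨hu, hu0, huL⟩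
      exact ⟨_, ⟨hu.dilate hk0, tendsto_dilate hk0 hu0 huL⟩,
        by simpa using JF_dilate_le hα hβ h₁ hk hu⟩
  · have hL0 : 0 < L := hδ.trans hL
    -- `L > δ(n)` gives at least two cells, so the two boundary conditions concern distinct cells.
    have hN1 : 1 < ⌈L / dlt n⌉ := Int.lt_ceil.2 (by rw [lt_div_iff₀ hδ]; simpa using hL)
    have hN : (1 : ℝ) < ((⌈L / dlt n⌉ : ℤ) : ℝ) := by exact_mod_cast hN1
    have ha : 0 < highGrid (dlt n) L - dlt n := by
      unfold highGrid
      nlinarith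
    have hHH : highGrid (dlt n) (highGrid (dlt n) L) = highGrid (dlt n) L := by
      unfold highGrid
      rw [mul_div_cancel_left₀ _ hδ.ne', Int.ceil_intCast]
    have hak : highGrid (dlt n) L - dlt n = ((⌈L / dlt n⌉ - 1 : ℤ) : ℝ) * dlt n := by
      unfold highGrid
      push_cast
      ring
    have hpc : ∀ (c : ℝ) (u : ℝ → ℝ), IsPC (dlt n) u →
        IsPC (dlt n) (modifyFrom (highGrid (dlt n) L - dlt n) c u) := fun c u hu => by
      rw [hak]
      exact hu.modifyFrom hδ _ c
    rw [add_assoc]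
    refine sInf_image_le_add (fun u => RDPMF_nonneg hn hβ (by linarith) u) ?_ ?_
    · refine ⟨modifyFrom (highGrid (dlt n) L - dlt n) (M * L) fun _ => 0,
        hpc _ _ fun _ _ _ => rfl, ?_, ?_⟩
      · rw [modifyFrom, if_pos ha]
      · rw [modifyFrom, if_neg (lt_irrefl _)]
    · rintro u ⟨hu, hu0, huL⟩
      refine ⟨_, ⟨hpc (M * highGrid (dlt n) L) u hu, ?_, ?_⟩, RDPMF_modify_le hn hβ hL hu huL⟩
      · rw [modifyFrom, if_pos ha, hu0]
      · rw [hHH, modifyFrom, if_neg (lt_irrefl _)]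

end PeronaMalik
end

section
/- Estimates for the limit minimum values: for every α>0, β>0, L>0 and M ∈ ℝ it holds that (1/2)(9α²βM²/2)^{1/3}·L − 2·6^{2/3}·α ≤ μ(α,β,L,M) ≤ μ*(α,β,L,M) ≤ (1/2)(9α²βM²/2)^{1/3}·L + 3α/2. -/
/-!
The optimal rate is `K = (1/2)(9α²βM²/2)^{1/3}`, characterised by `K³ = 9α²βM²/16`: it is the
minimum over `ℓ > 0` of `(α + βM²ℓ³/12) / ℓ`, attained at `ℓ₀ = 3α/(2K)`.

Lower bound. On an interval of length `ℓ` a constant has squared distance at least `M²ℓ³/12` from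
`M x` (`le_integral_const_sub_sq`). A step function with `k` jumps on `(0, L)` has `k + 1`
intervals of constancy, so summing `α + βM²ℓ³/12 ≥ Kℓ` over them gives
`JF + α ≥ K L` (`lower_bound`), and `1 ≤ 2·6^{2/3}`.

Upper bound. With `k = ⌈L/ℓ₀⌉` and `ℓ = L/k`, the staircase jumping by `Mℓ` at the points
`(j + 1/2)ℓ`, `j < k`, starts at `0`, ends at `M L`, and costs `αk + βM²Lℓ²/12`
(`integral_staircase`). Since `ℓ ≤ ℓ₀` and `k ≤ L/ℓ₀ + 1`, this is at most `K L + α`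
(`exists_competitor`). The comparison `μ ≤ μ*` is inclusion of the admissible classes, the smaller
one being nonempty thanks to the staircase.
-/

open MeasureTheory Filter Set

namespace PeronaMalik

/-! ### Step functions and their jump sets -/

/-- The right-continuous step function with base value `c` and a jump of height `J p` at each
`p ∈ s`. -/
noncomputable def stepFn (s : Finset ℝ) (c : ℝ) (J : ℝ → ℝ) (x : ℝ) : ℝ :=
  c + ∑ p ∈ s, (if p ≤ x then J p else 0)

lemma stepFn_insert_of_lt {s : Finset ℝ} {c : ℝ} {J : ℝ → ℝ} {p x : ℝ} (hx : x < p) :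
    stepFn (insert p s) c J x = stepFn s c J x := by
  unfold stepFn
  by_cases hp : p ∈ s
  · rw [Finset.insert_eq_of_mem hp]
  · rw [Finset.sum_insert hp, if_neg (not_le.mpr hx), zero_add]

lemma stepFn_of_forall_le {s : Finset ℝ} {c : ℝ} {J : ℝ → ℝ} {x : ℝ} (hx : ∀ p ∈ s, p ≤ x) :
    stepFn s c J x = c + ∑ p ∈ s, J p := by
  unfold stepFn
  congr 1
  exact Finset.sum_congr rfl fun p hp => if_pos (hx p hp)

lemma continuousAt_stepFn {s : Finset ℝ} {c : ℝ} {J : ℝ → ℝ} {x : ℝ} (hx : x ∉ s) :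
    ContinuousAt (stepFn s c J) x := by
  unfold stepFn
  refine continuousAt_const.add (tendsto_finsetSum _ fun p hp => ?_)
  have hne : p ≠ x := fun h => hx (h ▸ hp)
  rcases lt_or_gt_of_ne hne with h | h
  · have : (fun y : ℝ => if p ≤ y then J p else 0) =ᶠ[nhds x] fun _ => J p := by
      filter_upwards [lt_mem_nhds h] with y hy
      exact if_pos hy.le
    exact (continuousAt_const.congr this.symm :)
  · have : (fun y : ℝ => if p ≤ y then J p else 0) =ᶠ[nhds x] fun _ => 0 := by
      filter_upwards [gt_mem_nhds h] with y hy
      exact if_neg (not_le.mpr hy)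
    exact (continuousAt_const.congr this.symm :)

lemma not_continuousAt_stepFn {s : Finset ℝ} {c : ℝ} {J : ℝ → ℝ} {p : ℝ} (hp : p ∈ s)
    (hJ : J p ≠ 0) : ¬ ContinuousAt (stepFn s c J) p := by
  intro h
  -- Subtracting all the other jumps isolates the single jump at `p`.
  have h2 : ContinuousAt (fun x => stepFn s c J x - stepFn (s.erase p) c J x) p :=
    h.sub (continuousAt_stepFn (Finset.notMem_erase p s))
  have h3 : (fun x => stepFn s c J x - stepFn (s.erase p) c J x)
      = fun x => if p ≤ x then J p else 0 := by
    funext x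
    unfold stepFn
    rw [← Finset.add_sum_erase s _ hp]
    ring
  rw [h3] at h2
  have h4 : Tendsto (fun x : ℝ => if p ≤ x then J p else 0) (nhdsWithin p (Iio p))
      (nhds (J p)) := by
    have := h2.tendsto
    rw [if_pos le_rfl] at this
    exact this.mono_left nhdsWithin_le_nhds
  have h5 : Tendsto (fun x : ℝ => if p ≤ x then J p else 0) (nhdsWithin p (Iio p))
      (nhds 0) := by
    refine tendsto_const_nhds.congr' ?_
    filter_upwards [self_mem_nhdsWithin] with x hx
    exact (if_neg (not_le.mpr hx)).symm
  exact hJ (tendsto_nhds_unique h4 h5)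

lemma jumpSet_eq {a b : ℝ} {u : ℝ → ℝ} {s : Finset ℝ} {c : ℝ} {J : ℝ → ℝ}
    (hs : ∀ p ∈ s, p ∈ Ioo a b ∧ J p ≠ 0) (hu : ∀ x ∈ Ioo a b, u x = stepFn s c J x) :
    jumpSet a b u = s := by
  have key : ∀ x ∈ Ioo a b, (ContinuousAt u x ↔ ContinuousAt (stepFn s c J) x) := by
    intro x hx
    refine continuousAt_congr ?_
    filter_upwards [Ioo_mem_nhds hx.1 hx.2] with y hy using hu y hy
  ext x
  constructor
  · rintro ⟨hx, hc⟩
    by_contra hxs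
    exact hc ((key x hx).2 (continuousAt_stepFn hxs))
  · intro hx
    have := hs x hx
    exact ⟨this.1, fun hc => not_continuousAt_stepFn hx this.2 ((key x this.1).1 hc)⟩

lemma JF_eq {α β M L : ℝ} (hL : 0 < L) {u : ℝ → ℝ} {s : Finset ℝ} {c : ℝ} {J : ℝ → ℝ}
    (hs : ∀ p ∈ s, p ∈ Ioo 0 L ∧ J p ≠ 0) (hu : ∀ x ∈ Ioo 0 L, u x = stepFn s c J x) :
    JF α β (fun x => M * x) 0 L u
      = α * s.card + β * ∫ x in (0 : ℝ)..L, (stepFn s c J x - M * x) ^ 2 := by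
  unfold JF
  rw [jumpSet_eq hs hu, Set.ncard_coe_finset, intervalIntegral.integral_of_le hL.le,
    integral_Ioc_eq_integral_Ioo]
  congr 2
  refine setIntegral_congr_fun measurableSet_Ioo fun x hx => ?_
  simp only [hu x hx]

/-! ### Squared distance from a linear function, and the lower bound -/

lemma integral_const_sub_sq (C M a b : ℝ) :
    ∫ x in a..b, (C - M * x) ^ 2
      = C ^ 2 * (b - a) - C * M * (b ^ 2 - a ^ 2) + M ^ 2 * (b ^ 3 - a ^ 3) / 3 := by
  have h : ∀ x ∈ uIcc a b, HasDerivAt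
      (fun x : ℝ => C ^ 2 * x - C * M * x ^ 2 + M ^ 2 * x ^ 3 / 3) ((C - M * x) ^ 2) x := by
    intro x _
    have := (((hasDerivAt_id x).const_mul (C ^ 2)).sub
      ((hasDerivAt_pow 2 x).const_mul (C * M))).add
      (((hasDerivAt_pow 3 x).const_mul (M ^ 2)).div_const 3)
    refine HasDerivAt.congr_deriv this ?_
    norm_num
    ring
  rw [intervalIntegral.integral_eq_sub_of_hasDerivAt h
    (Continuous.intervalIntegrable (by fun_prop) _ _)]
  ring

/-- The best constant approximation of `M x` on an interval is its mean, whose squared error is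
`M² (b - a)³ / 12`. -/
lemma le_integral_const_sub_sq (C M : ℝ) {a b : ℝ} (hab : a ≤ b) :
    M ^ 2 * (b - a) ^ 3 / 12 ≤ ∫ x in a..b, (C - M * x) ^ 2 := by
  rw [integral_const_sub_sq]
  nlinarith [mul_nonneg (sub_nonneg.2 hab) (sq_nonneg (C - M * (a + b) / 2))]

lemma intervalIntegrable_stepFn_sub_sq (c M : ℝ) (J : ℝ → ℝ) (s : Finset ℝ) (a b : ℝ) :
    IntervalIntegrable (fun x => (stepFn s c J x - M * x) ^ 2) volume a b := by
  induction s using Finset.induction_on_max generalizing a b with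
  | empty =>
    simp only [stepFn, Finset.sum_empty]
    exact Continuous.intervalIntegrable (by fun_prop) _ _
  | insert p s hp ih =>
    -- It suffices to integrate between an arbitrary point and the last jump `p`.
    have key : ∀ a, IntervalIntegrable (fun x => (stepFn (insert p s) c J x - M * x) ^ 2)
        volume a p := by
      intro a
      rcases le_total a p with h | h
      · refine (ih a p).congr_uIoo fun x hx => ?_
        rw [uIoo_of_le h] at hx
        simp only [stepFn_insert_of_lt hx.2]
      · have : IntervalIntegrable (fun x => (c + ∑ q ∈ insert p s, J q - M * x) ^ 2)
          volume a p := Continuous.intervalIntegrable (by fun_prop) _ _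
        refine this.congr_uIoo fun x hx => ?_
        rw [uIoo_of_ge h] at hx
        have h1 : stepFn (insert p s) c J x = c + ∑ q ∈ insert p s, J q := by
          refine stepFn_of_forall_le fun q hq => ?_
          rcases Finset.mem_insert.1 hq with rfl | hq
          · exact hx.1.le
          · exact ((hp q hq).trans hx.1).le
        simp only [h1]
    exact (key a).trans (key b).symm

/-- If every interval of constancy of length `ℓ` together with one jump costs at least `K ℓ`,
then a step function with `s.card` jumps, hence `s.card + 1` intervals of constancy, costs at
least `K (b - a)` once one fictitious jump is added. -/
lemma lower_bound {α β M K : ℝ} (hβ : 0 < β)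
    (hK : ∀ l : ℝ, 0 ≤ l → K * l ≤ α + β * (M ^ 2 * l ^ 3 / 12))
    (c : ℝ) (J : ℝ → ℝ) (a : ℝ) (s : Finset ℝ) (b : ℝ) (hab : a ≤ b)
    (hs : ∀ p ∈ s, p ∈ Ioo a b) :
    K * (b - a) ≤ α * (s.card + 1) + β * ∫ x in a..b, (stepFn s c J x - M * x) ^ 2 := by
  induction s using Finset.induction_on_max generalizing b with
  | empty =>
    have h1 := le_integral_const_sub_sq c M hab
    have h2 := hK (b - a) (sub_nonneg.2 hab)
    have h3 := mul_le_mul_of_nonneg_left h1 hβ.le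
    simp only [stepFn, Finset.sum_empty, add_zero, Finset.card_empty, Nat.cast_zero, zero_add,
      mul_one]
    linarith
  | insert p s hp ih =>
    have hpab := hs p (Finset.mem_insert_self _ _)
    have h1 := ih p hpab.1.le fun q hq => ⟨(hs q (Finset.mem_insert_of_mem hq)).1, hp q hq⟩
    have e1 : ∫ x in a..p, (stepFn (insert p s) c J x - M * x) ^ 2
        = ∫ x in a..p, (stepFn s c J x - M * x) ^ 2 := by
      refine intervalIntegral.integral_congr_uIoo fun x hx => ?_
      rw [uIoo_of_le hpab.1.le] at hx
      simp only [stepFn_insert_of_lt hx.2]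
    have e2 : ∫ x in p..b, (stepFn (insert p s) c J x - M * x) ^ 2
        = ∫ x in p..b, (c + ∑ q ∈ insert p s, J q - M * x) ^ 2 := by
      refine intervalIntegral.integral_congr_uIoo fun x hx => ?_
      rw [uIoo_of_le hpab.2.le] at hx
      have h1 : stepFn (insert p s) c J x = c + ∑ q ∈ insert p s, J q := by
        refine stepFn_of_forall_le fun q hq => ?_
        rcases Finset.mem_insert.1 hq with rfl | hq
        · exact hx.1.le
        · exact ((hp q hq).trans hx.1).le
      simp only [h1]
    have h2 := le_integral_const_sub_sq (c + ∑ q ∈ insert p s, J q) M hpab.2.le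
    have h3 := mul_le_mul_of_nonneg_left h2 hβ.le
    have h4 := hK (b - p) (sub_nonneg.2 hpab.2.le)
    rw [← intervalIntegral.integral_add_adjacent_intervals
      (intervalIntegrable_stepFn_sub_sq c M J _ a p)
      (intervalIntegrable_stepFn_sub_sq c M J _ p b), e1, e2,
      Finset.card_insert_of_notMem fun h => lt_irrefl _ (hp p h)]
    push_cast
    linarith

/-! ### The staircase competitor -/

/-- The midpoints `(j + 1/2) ℓ`, `j < k`, of the `k` cells of length `ℓ`. -/
noncomputable def midpoints (l : ℝ) (k : ℕ) : Finset ℝ :=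
  (Finset.range k).image fun j : ℕ => ((j : ℝ) + 1 / 2) * l

lemma card_midpoints {l : ℝ} (hl : 0 < l) (k : ℕ) : (midpoints l k).card = k := by
  unfold midpoints
  rw [Finset.card_image_of_injective, Finset.card_range]
  intro i j h
  have := mul_right_cancel₀ hl.ne' h
  exact_mod_cast (add_right_cancel this : (i : ℝ) = j)

lemma mem_midpoints_bounds {l : ℝ} (hl : 0 < l) {k : ℕ} {p : ℝ} (hp : p ∈ midpoints l k) :
    l / 2 ≤ p ∧ p ≤ k * l - l / 2 := by
  unfold midpoints at hp
  obtain ⟨j, hj, rfl⟩ := Finset.mem_image.1 hp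
  have h1 : (j : ℝ) + 1 ≤ k := by exact_mod_cast Finset.mem_range.1 hj
  have h2 : (0 : ℝ) ≤ j := Nat.cast_nonneg j
  constructor <;> nlinarith

lemma midpoints_succ (l : ℝ) (k : ℕ) :
    midpoints l (k + 1) = insert (((k : ℝ) + 1 / 2) * l) (midpoints l k) := by
  unfold midpoints
  rw [Finset.range_add_one, Finset.image_insert]

lemma stepFn_midpoints {l : ℝ} (hl : 0 < l) (V : ℝ) (k : ℕ) {x : ℝ}
    (hx : k * l - l / 2 ≤ x) : stepFn (midpoints l k) 0 (fun _ => V) x = k * V := by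
  rw [stepFn_of_forall_le fun p hp => (mem_midpoints_bounds hl hp).2.trans hx]
  simp [card_midpoints hl]

/-- Squared error of the staircase: each of the `2 k` half cells contributes
`M² (ℓ / 2)³ / 3`. -/
lemma integral_staircase {l : ℝ} (hl : 0 < l) (M : ℝ) (k : ℕ) :
    ∫ x in (0 : ℝ)..(k * l), (stepFn (midpoints l k) 0 (fun _ => M * l) x - M * x) ^ 2
      = k * (M ^ 2 * l ^ 3 / 12) := by
  induction k with
  | zero => simp
  | succ k ih =>
    have hk : (0 : ℝ) ≤ k := Nat.cast_nonneg k
    set q : ℝ := ((k : ℝ) + 1 / 2) * l with hq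
    have hint := intervalIntegrable_stepFn_sub_sq 0 M (fun _ => M * l) (midpoints l (k + 1))
    have hkq : k * l ≤ q := by rw [hq]; nlinarith
    have h0k : 0 ≤ k * l := by positivity
    have hqk : q ≤ ((k + 1 : ℕ) : ℝ) * l := by rw [hq]; push_cast; nlinarith
    have e1 : ∫ x in (0 : ℝ)..(k * l),
        (stepFn (midpoints l (k + 1)) 0 (fun _ => M * l) x - M * x) ^ 2
        = k * (M ^ 2 * l ^ 3 / 12) := by
      rw [← ih]
      refine intervalIntegral.integral_congr_uIoo fun x hx => ?_
      rw [uIoo_of_le h0k] at hx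
      simp only [midpoints_succ, ← hq, stepFn_insert_of_lt (hx.2.trans_le hkq)]
    have e2 : ∫ x in (k * l)..q,
        (stepFn (midpoints l (k + 1)) 0 (fun _ => M * l) x - M * x) ^ 2
        = ∫ x in (k * l)..q, (k * (M * l) - M * x) ^ 2 := by
      refine intervalIntegral.integral_congr_uIoo fun x hx => ?_
      rw [uIoo_of_le hkq] at hx
      have : k * l - l / 2 ≤ x := by linarith [hx.1]
      simp only [midpoints_succ, ← hq, stepFn_insert_of_lt hx.2, stepFn_midpoints hl _ k this]
    have e3 : ∫ x in q..(((k + 1 : ℕ) : ℝ) * l),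
        (stepFn (midpoints l (k + 1)) 0 (fun _ => M * l) x - M * x) ^ 2
        = ∫ x in q..(((k + 1 : ℕ) : ℝ) * l), (((k + 1 : ℕ) : ℝ) * (M * l) - M * x) ^ 2 := by
      refine intervalIntegral.integral_congr_uIoo fun x hx => ?_
      rw [uIoo_of_le hqk] at hx
      have : ((k + 1 : ℕ) : ℝ) * l - l / 2 ≤ x := by
        have := hx.1
        push_cast
        rw [hq] at this
        linarith
      simp only [stepFn_midpoints hl _ (k + 1) this]
    rw [← intervalIntegral.integral_add_adjacent_intervals (hint 0 (k * l)) (hint _ _),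
      ← intervalIntegral.integral_add_adjacent_intervals (hint (k * l) q) (hint _ _), e1, e2, e3,
      integral_const_sub_sq, integral_const_sub_sq, hq]
    push_cast
    ring

/-- A staircase with cells of length `L / k`, where `k` is the least integer making them no
longer than the optimal length `ℓ₀ = 3 α / (2 K)`, has the prescribed boundary values and costs
at most `K L + α`. -/
lemma exists_competitor {α β L M K : ℝ} (hα : 0 < α) (hβ : 0 < β) (hL : 0 < L) (hK0 : 0 ≤ K)
    (hK : K ^ 3 = 9 * α ^ 2 * β * M ^ 2 / 16) :
    ∃ u : ℝ → ℝ, (IsStep 0 L u ∧ Tendsto u (nhdsWithin 0 (Ioi 0)) (nhds 0) ∧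
      Tendsto u (nhdsWithin L (Iio L)) (nhds (M * L))) ∧
      JF α β (fun x => M * x) 0 L u ≤ K * L + α := by
  rcases eq_or_ne M 0 with rfl | hM
  · refine ⟨fun _ => 0, ⟨⟨∅, 0, fun _ => 0, by simp, by simp⟩, tendsto_const_nhds, ?_⟩, ?_⟩
    · rw [zero_mul]
      exact tendsto_const_nhds
    · rw [JF_eq (s := ∅) (c := 0) (J := fun _ => 0) hL (by simp) (by simp [stepFn])]
      simp [stepFn]
      positivity
  have hKpos : 0 < K := by
    refine hK0.lt_of_ne fun h => ?_
    rw [← h] at hK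
    have : 0 < 9 * α ^ 2 * β * M ^ 2 / 16 := by positivity
    linarith
  set l₀ : ℝ := 3 * α / (2 * K) with hl₀
  have hl₀pos : 0 < l₀ := by positivity
  have hKl : K = 3 * α / (2 * l₀) := by rw [hl₀]; field_simp
  set k : ℕ := ⌈L / l₀⌉₊ with hk
  have hkpos : 0 < k := Nat.ceil_pos.2 (by positivity)
  have hkR : (0 : ℝ) < k := by exact_mod_cast hkpos
  have hk1 : L / l₀ ≤ k := Nat.le_ceil _
  have hk2 : (k : ℝ) < L / l₀ + 1 := Nat.ceil_lt_add_one (by positivity)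
  set l : ℝ := L / k with hl
  have hlpos : 0 < l := by positivity
  have hkl : k * l = L := by rw [hl]; field_simp
  have hll : l ≤ l₀ := by
    rw [hl, div_le_iff₀ hkR, mul_comm]
    exact (div_le_iff₀ hl₀pos).1 hk1
  have hs : ∀ p ∈ midpoints l k, p ∈ Ioo 0 L ∧ (fun _ : ℝ => M * l) p ≠ 0 := by
    intro p hp
    have := mem_midpoints_bounds hlpos hp
    rw [hkl] at this
    exact ⟨⟨by linarith, by linarith⟩, mul_ne_zero hM hlpos.ne'⟩
  refine ⟨stepFn (midpoints l k) 0 (fun _ => M * l),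
    ⟨⟨_, _, _, hs, fun x _ => rfl⟩, ?_, ?_⟩, ?_⟩
  · refine tendsto_const_nhds.congr' ?_
    filter_upwards [nhdsWithin_le_nhds (gt_mem_nhds (half_pos hlpos))] with x hx
    unfold stepFn
    rw [Finset.sum_eq_zero, add_zero]
    intro p hp
    exact if_neg (not_le.2 (hx.trans_le (mem_midpoints_bounds hlpos hp).1))
  · refine tendsto_const_nhds.congr' ?_
    filter_upwards [nhdsWithin_le_nhds (lt_mem_nhds (show L - l / 2 < L by linarith))] with x hx
    rw [stepFn_midpoints hlpos _ _ (by rw [hkl]; exact hx.le), ← hkl]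
    ring
  · rw [JF_eq hL hs (fun x _ => rfl), card_midpoints hlpos]
    have hi := integral_staircase hlpos M k
    rw [hkl] at hi
    rw [hi]
    have h1 : α * k ≤ α * (L / l₀ + 1) := mul_le_mul_of_nonneg_left hk2.le hα.le
    have h2 : l ^ 2 ≤ l₀ ^ 2 := pow_le_pow_left₀ hlpos.le hll 2
    -- The optimality relation defining `ℓ₀`.
    have h3 : β * M ^ 2 * l₀ ^ 3 = 6 * α := by
      have : β * M ^ 2 = 16 * K ^ 3 / (9 * α ^ 2) := by rw [hK]; field_simp
      rw [this, hl₀]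
      field_simp
      norm_num
    have h4 : β * (k * (M ^ 2 * l ^ 3 / 12)) = β * M ^ 2 * L * l ^ 2 / 12 := by
      rw [← hkl]; ring
    have h5 : β * M ^ 2 * L * l ^ 2 / 12 ≤ β * M ^ 2 * L * l₀ ^ 2 / 12 := by gcongr
    have h6 : β * M ^ 2 * L * l₀ ^ 2 / 12 = α * L / (2 * l₀) := by
      rw [eq_div_iff (by positivity)]
      linear_combination (L / 6) * h3
    have h7 : K * L = α * (L / l₀) + α * L / (2 * l₀) := by
      rw [hKl]; field_simp; norm_num
    rw [h4]
    linarith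

/-! ### The estimates -/

/-- Estimates for the limit minimum values:
`(1/2)(9α²βM²/2)^{1/3} L − 2·6^{2/3} α ≤ μ(α,β,L,M) ≤ μ*(α,β,L,M) ≤
(1/2)(9α²βM²/2)^{1/3} L + 3α/2`. -/
theorem mu_estimates
    (α β L M : ℝ) (hα : 0 < α) (hβ : 0 < β) (hL : 0 < L) :
    (1 / 2) * (9 * α ^ 2 * β * M ^ 2 / 2) ^ ((1 : ℝ) / 3) * L
        - 2 * (6 : ℝ) ^ ((2 : ℝ) / 3) * α ≤ muLim α β L M ∧
    muLim α β L M ≤ muLimStar α β L M ∧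
    muLimStar α β L M ≤
      (1 / 2) * (9 * α ^ 2 * β * M ^ 2 / 2) ^ ((1 : ℝ) / 3) * L + 3 * α / 2 := by
  set K : ℝ := (1 / 2) * (9 * α ^ 2 * β * M ^ 2 / 2) ^ ((1 : ℝ) / 3) with hKdef
  have hbase : 0 ≤ 9 * α ^ 2 * β * M ^ 2 / 2 := by positivity
  have hK0 : 0 ≤ K := by positivity
  have hK : K ^ 3 = 9 * α ^ 2 * β * M ^ 2 / 16 := by
    rw [hKdef, mul_pow, ← Real.rpow_mul_natCast hbase]
    norm_num
    ring
  have hpiece : ∀ l : ℝ, 0 ≤ l → K * l ≤ α + β * (M ^ 2 * l ^ 3 / 12) := by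
    intro l hl
    have h1 : β * (M ^ 2 * l ^ 3 / 12) = 4 * (K * l) ^ 3 / (27 * α ^ 2) := by
      rw [mul_pow, hK]; field_simp; ring
    -- The tangent-line inequality `t ≤ 1 + 4 t³ / 27` for `t = K l / α`, tangent at `t = 3/2`.
    have h2 : α + 4 * (K * l) ^ 3 / (27 * α ^ 2) - K * l
        = 4 * (K * l - 3 / 2 * α) ^ 2 * (K * l + 3 * α) / (27 * α ^ 2) := by
      field_simp; ring
    have h3 : 0 ≤ 4 * (K * l - 3 / 2 * α) ^ 2 * (K * l + 3 * α) / (27 * α ^ 2) := by positivity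
    rw [h1]
    linarith
  have hlow : ∀ u, IsStep 0 L u → K * L - α ≤ JF α β (fun x => M * x) 0 L u := by
    rintro u ⟨s, c, J, hs, hu⟩
    rw [JF_eq hL hs hu]
    have := lower_bound hβ hpiece c J 0 s L hL.le fun p hp => (hs p hp).1
    rw [sub_zero] at this
    linarith
  have h6 : (1 : ℝ) ≤ (6 : ℝ) ^ ((2 : ℝ) / 3) :=
    Real.one_le_rpow (by norm_num) (by norm_num)
  obtain ⟨u, hu, hJ⟩ := exists_competitor hα hβ hL hK0 hK
  have hbdd : BddBelow ((fun u => JF α β (fun x => M * x) 0 L u) '' {u | IsStep 0 L u}) := by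
    refine ⟨K * L - α, ?_⟩
    rintro _ ⟨v, hv, rfl⟩
    exact hlow v hv
  have hsub : (fun u => JF α β (fun x => M * x) 0 L u) ''
      {u | IsStep 0 L u ∧ Tendsto u (nhdsWithin 0 (Set.Ioi 0)) (nhds 0) ∧
         Tendsto u (nhdsWithin L (Set.Iio L)) (nhds (M * L))} ⊆
      (fun u => JF α β (fun x => M * x) 0 L u) '' {u | IsStep 0 L u} :=
    image_mono fun v hv => hv.1
  refine ⟨?_, ?_, ?_⟩
  · refine le_csInf ⟨_, u, hu.1, rfl⟩ ?_
    rintro _ ⟨v, hv, rfl⟩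
    have := hlow v hv
    show _ ≤ JF α β (fun x => M * x) 0 L v
    nlinarith
  · exact csInf_le_csInf hbdd ⟨_, u, hu, rfl⟩ hsub
  · refine (csInf_le (hbdd.mono hsub) ⟨u, hu, rfl⟩).trans (hJ.trans ?_)
    linarith

end PeronaMalik
end
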